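/- Let q be a prime power and let ν, m₁, m₂, t be positive integers with m₁ ≥ t+1, m₂ ≥ t+1, and 2ν ≥ m₁ + m₂ + 1 + max{m₁ + t + 2, m₂}. Suppose ℱ₁ ⊆ 𝒫_{m₁} and ℱ₂ ⊆ 𝒫_{m₂} are nonempty non-trivial cross t-intersecting families with τ_t(ℱ₂) ≥ τ_t(ℱ₁) and (τ_t(ℱ₁), τ_t(ℱ₂)) ≠ (t, t+1). Then |ℱ₁|·|ℱ₂| < c₁(ν,m₁,m₂,t). -/

import Mathlib

open Finset Module

noncomputable section

/-- Gaussian binomial coefficient `[n choose k]_q` as a rational number. -/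
def gaussBinom (q n k : ℕ) : ℚ :=
  ∏ i ∈ Finset.range k, ((q : ℚ) ^ ((n : ℤ) - i) - 1) / ((q : ℚ) ^ ((k : ℤ) - i) - 1)

/-- `N'(a; m; 2ν)`, the number of `m`-dim totally isotropic subspaces containing
a fixed `a`-dim one. -/
def Nprime (q a m ν : ℕ) : ℚ :=
  ∏ i ∈ Finset.Icc 1 (m - a), ((q : ℚ) ^ (2 * ((ν : ℤ) - m + i)) - 1) / ((q : ℚ) ^ (i : ℤ) - 1)

variable {K V : Type*} [Field K] [AddCommGroup V] [Module K V]

/-- A subspace is totally isotropic w.r.t. the bilinear form `f`. -/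
def TotallyIsotropic (f : V →ₗ[K] V →ₗ[K] K) (W : Submodule K V) : Prop :=
  ∀ x ∈ W, ∀ y ∈ W, f x y = 0

/-- `polar f m` = `𝒫_m`, the set of `m`-dimensional totally isotropic subspaces. -/
def polar (f : V →ₗ[K] V →ₗ[K] K) (m : ℕ) : Set (Submodule K V) :=
  {W | TotallyIsotropic f W ∧ finrank K W = m}

/-- `X` is a `t`-cover of the family `ℱ`. -/
def IsTCover (f : V →ₗ[K] V →ₗ[K] K) (t : ℕ) (ℱ : Set (Submodule K V))
    (X : Submodule K V) : Prop :=
  TotallyIsotropic f X ∧ ∀ F ∈ ℱ, t ≤ finrank K ↥(X ⊓ F)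

/-- `τ_t(ℱ)`, the minimum dimension of a `t`-cover of `ℱ`. -/
def tauCover (f : V →ₗ[K] V →ₗ[K] K) (t : ℕ) (ℱ : Set (Submodule K V)) : ℕ :=
  sInf {x | ∃ X, IsTCover f t ℱ X ∧ finrank K ↥X = x}

def C1 (f : V →ₗ[K] V →ₗ[K] K) (M T : Submodule K V) (m t : ℕ) : Set (Submodule K V) :=
  {F | F ∈ polar f m ∧ T ≤ F ∧ t + 1 ≤ finrank K ↥(F ⊓ M)}

def C2 (f : V →ₗ[K] V →ₗ[K] K) (M T : Submodule K V) (m : ℕ) : Set (Submodule K V) :=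
  {F | F ∈ polar f m ∧ T ≤ F} ∪ {F | F ∈ polar f m ∧ F ≤ M}

def C3 (f : V →ₗ[K] V →ₗ[K] K) (S : Submodule K V) (m : ℕ) : Set (Submodule K V) :=
  {F | F ∈ polar f m ∧ S ≤ F}

def C4 (f : V →ₗ[K] V →ₗ[K] K) (S : Submodule K V) (m t : ℕ) : Set (Submodule K V) :=
  {F | F ∈ polar f m ∧ t ≤ finrank K ↥(F ⊓ S)}

def s0 (q ν m s t : ℕ) : ℚ :=
  gaussBinom q (s - t) 1 * Nprime q (t + 1) m ν - q * gaussBinom q (s - t) 2 * Nprime q (t + 2) m ν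


section helpers

theorem finrank_sup_span [FiniteDimensional K V] (S : Submodule K V) (v : V) (hv : v ∉ S) :
    finrank K ↥(S ⊔ K ∙ v) = finrank K S + 1 := by
  have h0 : v ≠ 0 := fun h => hv (h ▸ S.zero_mem)
  have h := Submodule.finrank_sup_add_finrank_inf_eq S (K ∙ v)
  have hd : S ⊓ (K ∙ v) = ⊥ := by
    rw [← disjoint_iff]
    exact (Submodule.disjoint_span_singleton' h0).2 hv
  rw [hd, finrank_bot, finrank_span_singleton h0] at h
  omega

theorem exists_sub_finrank [FiniteDimensional K V] (Y : Submodule K V) (k : ℕ)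
    (hk : k ≤ finrank K Y) : ∃ W ≤ Y, finrank K W = k := by
  induction k with
  | zero => exact ⟨⊥, bot_le, finrank_bot K V⟩
  | succ k ih =>
    obtain ⟨W, hW, hk'⟩ := ih (by omega)
    have : ¬ Y ≤ W := fun h => by
      have := Submodule.finrank_mono h
      omega
    obtain ⟨v, hv, hvW⟩ := SetLike.not_le_iff_exists.1 this
    exact ⟨W ⊔ K ∙ v, sup_le hW (by simpa using hv), by rw [finrank_sup_span W v hvW, hk']⟩

theorem exists_rel_compl (A Y : Submodule K V) (h : A ≤ Y) :
    ∃ C ≤ Y, A ⊓ C = ⊥ ∧ A ⊔ C = Y := by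
  obtain ⟨C, hC⟩ := A.exists_isCompl
  refine ⟨C ⊓ Y, inf_le_right, ?_, ?_⟩
  · rw [← inf_assoc, hC.inf_eq_bot, bot_inf_eq]
  · rw [← sup_inf_assoc_of_le C h, hC.sup_eq_top, top_inf_eq]

theorem finrank_of_compl [FiniteDimensional K V] (A C Y : Submodule K V)
    (h1 : A ⊓ C = ⊥) (h2 : A ⊔ C = Y) :
    finrank K A + finrank K C = finrank K Y := by
  have h := Submodule.finrank_sup_add_finrank_inf_eq A C
  rw [h1, h2, finrank_bot] at h
  omega

open Classical in
theorem card_mem [Fintype K] [Fintype V] (W : Submodule K V) :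
    (Finset.univ.filter (fun v => v ∈ W)).card = Fintype.card K ^ finrank K W := by
  rw [← Fintype.card_subtype]
  exact Module.card_eq_pow_finrank (K := K) (V := W)

theorem ti_mono {f : V →ₗ[K] V →ₗ[K] K} {A B : Submodule K V} (h : A ≤ B)
    (hB : TotallyIsotropic f B) : TotallyIsotropic f A :=
  fun x hx y hy => hB x (h hx) y (h hy)

theorem finrank_orth [FiniteDimensional K V] (f : V →ₗ[K] V →ₗ[K] K)
    (hnd : ∀ v, (∀ w, f v w = 0) → v = 0) (A : Submodule K V) :
    finrank K A + finrank K (LinearMap.BilinForm.orthogonal f A) = finrank K V := by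
  have h := LinearMap.BilinForm.finrank_add_finrank_orthogonal' (B := f) A
  have hk : LinearMap.ker f = ⊥ := by
    rw [eq_bot_iff]
    intro v hv
    exact (Submodule.mem_bot K).2 (hnd v (fun w => by rw [LinearMap.mem_ker.1 hv]; rfl))
  rw [hk, inf_bot_eq, finrank_bot] at h
  omega

theorem ti_sup_span {f : V →ₗ[K] V →ₗ[K] K} (halt : ∀ v, f v v = 0) (A : Submodule K V) (v : V)
    (hA : TotallyIsotropic f A) (hv : ∀ a ∈ A, f a v = 0) : TotallyIsotropic f (A ⊔ K ∙ v) := by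
  have hanti : ∀ x y, f x y = - f y x := fun x y => (LinearMap.IsAlt.neg (B := f) halt y x).symm
  intro x hx y hy
  obtain ⟨a, ha, b, hb, rfl⟩ := Submodule.mem_sup.1 hx
  obtain ⟨c, hc, d, hd, rfl⟩ := Submodule.mem_sup.1 hy
  obtain ⟨r, rfl⟩ := Submodule.mem_span_singleton.1 hb
  obtain ⟨s, rfl⟩ := Submodule.mem_span_singleton.1 hd
  simp [hA a ha c hc, hv a ha, hanti v c, hv c hc, halt]

/-- the count formula -/
def NN (q n m a : ℕ) : ℝ :=
  if m < a then 0 else ∏ i ∈ Finset.Ico a m, (((q:ℝ) ^ (n - i) - q ^ i) / (q ^ m - q ^ i))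

theorem NN_gt {q n m a : ℕ} (h : m < a) : NN q n m a = 0 := by simp [NN, h]

theorem NN_self (q n m : ℕ) : NN q n m m = 1 := by simp [NN]

theorem NN_rec (q n m a : ℕ) (hq : 2 ≤ q) (h : a < m) :
    NN q n m a * ((q:ℝ) ^ m - q ^ a) = ((q:ℝ) ^ (n - a) - q ^ a) * NN q n m (a + 1) := by
  have hq' : (1:ℝ) < q := by exact_mod_cast hq
  have h1 : (0:ℝ) < (q:ℝ) ^ m - q ^ a := sub_pos.2 (pow_lt_pow_right₀ hq' h)
  have h2 : ¬ m < a := by omega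
  have h3 : ¬ m < a + 1 := by omega
  simp only [NN, h2, h3, if_false]
  rw [Finset.prod_eq_prod_Ico_succ_bot h]
  field_simp

theorem NN_pos (q n m a : ℕ) (hq : 2 ≤ q) (h : a ≤ m) (hn : 2 * m ≤ n) : 0 < NN q n m a := by
  have hq' : (1:ℝ) < q := by exact_mod_cast hq
  simp only [NN, not_lt.2 h, if_false]
  refine Finset.prod_pos fun i hi => ?_
  rw [Finset.mem_Ico] at hi
  exact div_pos (sub_pos.2 (pow_lt_pow_right₀ hq' (by omega)))
    (sub_pos.2 (pow_lt_pow_right₀ hq' hi.2))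

theorem NN_nonneg (q n m a : ℕ) (hq : 2 ≤ q) (hn : 2 * m ≤ n) : 0 ≤ NN q n m a := by
  rcases le_or_gt a m with h | h
  · exact (NN_pos q n m a hq h hn).le
  · rw [NN_gt h]

theorem NN_step (q n m a e : ℕ) (hq : 2 ≤ q) (hn : 2 * m ≤ n) (he : e + m + a ≤ n ∨ m ≤ a) :
    (q:ℝ) ^ e * NN q n m (a + 1) ≤ NN q n m a := by
  have hq' : (1:ℝ) < q := by exact_mod_cast hq
  rcases le_or_gt m a with h | h
  · rw [NN_gt (show m < a + 1 by omega), mul_zero]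
    exact NN_nonneg q n m a hq hn
  have he : e + m + a ≤ n := by omega
  have h1 : (0:ℝ) < (q:ℝ) ^ m - q ^ a := sub_pos.2 (pow_lt_pow_right₀ hq' h)
  have hrec := NN_rec q n m a hq h
  have hN := NN_nonneg q n m (a + 1) hq hn
  refine le_of_mul_le_mul_right ?_ h1
  rw [hrec]
  have : (q:ℝ) ^ e * (q ^ m - q ^ a) ≤ (q:ℝ) ^ (n - a) - q ^ a := by
    have e1 : (q:ℝ) ^ e * q ^ m ≤ q ^ (n - a) := by
      rw [← pow_add]; exact pow_le_pow_right₀ hq'.le (by omega)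
    obtain ⟨d, hd⟩ : ∃ d, n - a = e + m + d := ⟨n - a - (e + m), by omega⟩
    have e3 : (1:ℝ) ≤ q ^ e := one_le_pow₀ hq'.le
    have e2 : (0:ℝ) < q ^ a := by positivity
    nlinarith
  nlinarith

open Classical in
theorem card_diff [Fintype K] [Fintype V] (A B : Submodule K V) (h : A ≤ B) :
    ((Finset.univ.filter (fun v => v ∈ B ∧ v ∉ A)).card : ℝ)
      = (Fintype.card K : ℝ) ^ finrank K B - (Fintype.card K : ℝ) ^ finrank K A := by
  have h1 := card_mem B
  have h2 := card_mem A
  have h3 := Finset.card_filter_add_card_filter_not (s := Finset.univ.filter (fun v => v ∈ B))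
    (fun v => v ∈ A)
  rw [Finset.filter_filter, Finset.filter_filter] at h3
  have h4 : (Finset.univ.filter (fun v => v ∈ B ∧ v ∈ A)) = Finset.univ.filter (fun v => v ∈ A) := by
    ext v
    simp only [Finset.mem_filter, Finset.mem_univ, true_and]
    exact ⟨fun x => x.2, fun x => ⟨h x, x⟩⟩
  rw [h4, h2, h1] at h3
  rw [eq_sub_iff_add_eq, add_comm]
  exact_mod_cast h3

open Classical in
theorem cnt_eq [Fintype K] [Fintype V] [Fintype (Submodule K V)] (f : V →ₗ[K] V →ₗ[K] K)
    (halt : ∀ v, f v v = 0) (hnd : ∀ v, (∀ w, f v w = 0) → v = 0) (m : ℕ)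
    (hq : 2 ≤ Fintype.card K) (d : ℕ) : ∀ A : Submodule K V, TotallyIsotropic f A →
    m ≤ finrank K A + d →
    ((Finset.univ.filter (fun F => F ∈ polar f m ∧ A ≤ F)).card : ℝ)
      = NN (Fintype.card K) (finrank K V) m (finrank K A) := by
  have hfd : FiniteDimensional K V := Module.Finite.of_finite
  have hq' : (1:ℝ) < Fintype.card K := by exact_mod_cast hq
  induction d with
  | zero =>
    intro A hA hd
    rcases (show m ≤ finrank K A by omega).lt_or_eq with h | h
    · rw [NN_gt h, Finset.filter_eq_empty_iff.2]
      · simp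
      · rintro F - ⟨⟨_, hF⟩, hAF⟩
        have := Submodule.finrank_mono hAF
        omega
    · rw [h, NN_self]
      have : (Finset.univ.filter (fun F => F ∈ polar f (finrank K A) ∧ A ≤ F)) = {A} := by
        ext F
        simp only [Finset.mem_filter, Finset.mem_univ, true_and, Finset.mem_singleton]
        constructor
        · rintro ⟨⟨_, hF⟩, hAF⟩
          exact (Submodule.eq_of_le_of_finrank_eq hAF hF.symm).symm
        · rintro rfl
          exact ⟨⟨hA, rfl⟩, le_rfl⟩
      rw [this]; simp
  | succ d ih =>
    intro A hA hd
    rcases le_or_gt m (finrank K A + d) with h | h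
    · exact ih A hA h
    have ha : finrank K A < m := by omega
    have h1 : (0:ℝ) < (Fintype.card K:ℝ) ^ m - (Fintype.card K:ℝ) ^ (finrank K A) :=
      sub_pos.2 (pow_lt_pow_right₀ hq' ha)
    refine mul_right_cancel₀ h1.ne' ?_
    rw [NN_rec _ _ _ _ hq ha]
    set O := LinearMap.BilinForm.orthogonal f A with hO
    have hAO : A ≤ O := fun x hx => (LinearMap.BilinForm.mem_orthogonal_iff).2 (fun n hn => hA n hn x hx)
    have horth : finrank K A + finrank K O = finrank K V := finrank_orth f hnd A
    have hdc := Finset.sum_card_bipartiteAbove_eq_sum_card_bipartiteBelow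
      (s := Finset.univ.filter (fun F => F ∈ polar f m ∧ A ≤ F))
      (t := Finset.univ.filter (fun v => v ∈ O ∧ v ∉ A)) (fun F v => v ∈ F)
    have hL : ∀ F ∈ Finset.univ.filter (fun F => F ∈ polar f m ∧ A ≤ F),
        (((Finset.univ.filter (fun v => v ∈ O ∧ v ∉ A)).bipartiteAbove (fun F v => v ∈ F) F).card : ℝ)
        = (Fintype.card K:ℝ) ^ m - (Fintype.card K:ℝ) ^ (finrank K A) := by
      intro F hF
      simp only [Finset.mem_filter, Finset.mem_univ, true_and] at hF
      obtain ⟨⟨hFt, hFm⟩, hAF⟩ := hF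
      rw [← hFm, ← card_diff A F hAF]
      congr 2
      ext v
      simp only [Finset.bipartiteAbove, Finset.mem_filter, Finset.mem_univ, true_and]
      constructor
      · rintro ⟨⟨_, h2⟩, h3⟩
        exact ⟨h3, h2⟩
      · rintro ⟨h3, h2⟩
        exact ⟨⟨(LinearMap.BilinForm.mem_orthogonal_iff).2 (fun n hn => hFt n (hAF hn) v h3), h2⟩, h3⟩
    have hR : ∀ v ∈ Finset.univ.filter (fun v => v ∈ O ∧ v ∉ A),
        (((Finset.univ.filter (fun F => F ∈ polar f m ∧ A ≤ F)).bipartiteBelow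
          (fun F v => v ∈ F) v).card : ℝ)
        = NN (Fintype.card K) (finrank K V) m (finrank K A + 1) := by
      intro v hv
      simp only [Finset.mem_filter, Finset.mem_univ, true_and] at hv
      obtain ⟨hvO, hvA⟩ := hv
      have hi := ih (A ⊔ K ∙ v) (ti_sup_span halt A v hA
        (fun a ha => (LinearMap.BilinForm.mem_orthogonal_iff).1 hvO a ha))
        (by rw [finrank_sup_span A v hvA]; omega)
      rw [finrank_sup_span A v hvA] at hi
      rw [← hi]
      congr 2
      ext F
      simp only [Finset.bipartiteBelow, Finset.mem_filter, Finset.mem_univ, true_and, sup_le_iff,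
        Submodule.span_singleton_le_iff_mem, and_assoc]
    have hdc' := congrArg (fun n : ℕ => (n:ℝ)) hdc
    simp only [Nat.cast_sum] at hdc'
    rw [Finset.sum_congr rfl hL, Finset.sum_congr rfl hR, Finset.sum_const, Finset.sum_const,
      nsmul_eq_mul, nsmul_eq_mul, card_diff A O hAO] at hdc'
    rw [hdc', show finrank K V - finrank K A = finrank K O from (Nat.eq_sub_of_add_eq' horth).symm]

open Classical in
theorem step [Fintype K] [Fintype V] (𝒢 : Finset (Submodule K V)) (S H : Submodule K V) (t m' s : ℕ)
    (B : ℝ) (htm : t ≤ m') (hH : finrank K H = m') (hSH : finrank K ↥(S ⊓ H) < t)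
    (hcr : ∀ F ∈ 𝒢, t ≤ finrank K ↥(F ⊓ H)) (hS : finrank K S = s)
    (hB : ∀ S' : Submodule K V, finrank K S' = s + 1 → ((𝒢.filter (fun F => S' ≤ F)).card : ℝ) ≤ B) :
    ((𝒢.filter (fun F => S ≤ F)).card : ℝ) ≤ (Fintype.card K : ℝ) ^ (m' - t + 1) * B := by
  have hfd : FiniteDimensional K V := Module.Finite.of_finite
  obtain ⟨C, hCH, hC1, hC2⟩ := exists_rel_compl (S ⊓ H) H inf_le_right
  have hC3 := finrank_of_compl _ _ _ hC1 hC2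
  obtain ⟨W, hWC, hW⟩ := exists_sub_finrank C (m' - t + 1) (by omega)
  have hWS : ∀ w ∈ W, w ∈ S → w = 0 := fun w hw hs => by
    have : w ∈ S ⊓ H ⊓ C := ⟨⟨hs, hCH (hWC hw)⟩, hWC hw⟩
    rw [hC1] at this
    exact (Submodule.mem_bot K).1 this
  have hsub : 𝒢.filter (fun F => S ≤ F) ⊆
      (Finset.univ.filter (fun v => v ∈ W ∧ v ≠ 0)).biUnion
        (fun w => 𝒢.filter (fun F => (S ⊔ K ∙ w) ≤ F)) := by
    intro F hF
    rw [Finset.mem_filter] at hF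
    have h1 := hcr F hF.1
    have h2 := Submodule.finrank_sup_add_finrank_inf_eq (F ⊓ H) W
    have h3 : finrank K ↥((F ⊓ H) ⊔ W) ≤ finrank K H :=
      Submodule.finrank_mono (sup_le inf_le_right (hWC.trans hCH))
    have h4 : (F ⊓ H) ⊓ W ≠ ⊥ := fun h => by
      rw [h, finrank_bot] at h2
      omega
    obtain ⟨w, hw, hw0⟩ := Submodule.exists_mem_ne_zero_of_ne_bot h4
    simp only [Finset.mem_biUnion, Finset.mem_filter, Finset.mem_univ, true_and, sup_le_iff,
      Submodule.span_singleton_le_iff_mem]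
    exact ⟨w, ⟨hw.2, hw0⟩, hF.1, hF.2, hw.1.1⟩
  have hle := (Finset.card_le_card hsub).trans Finset.card_biUnion_le
  have hB0 : 0 ≤ B := by
    by_contra hneg
    have : finrank K W ≠ 0 := by omega
    have hWb : W ≠ ⊥ := fun h => this (by rw [h, finrank_bot])
    obtain ⟨w, hw, hw0⟩ := Submodule.exists_mem_ne_zero_of_ne_bot hWb
    have := hB (S ⊔ K ∙ w) (by rw [finrank_sup_span S w (fun h => hw0 (hWS w hw h)), hS])
    have h0 : (0:ℝ) ≤ ((𝒢.filter (fun F => (S ⊔ K ∙ w) ≤ F)).card : ℝ) := Nat.cast_nonneg _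
    linarith
  calc ((𝒢.filter (fun F => S ≤ F)).card : ℝ)
      ≤ ∑ w ∈ Finset.univ.filter (fun v => v ∈ W ∧ v ≠ 0),
        ((𝒢.filter (fun F => (S ⊔ K ∙ w) ≤ F)).card : ℝ) := by exact_mod_cast hle
    _ ≤ ∑ w ∈ Finset.univ.filter (fun v => v ∈ W ∧ v ≠ 0), B := by
        refine Finset.sum_le_sum fun w hw => ?_
        simp only [Finset.mem_filter, Finset.mem_univ, true_and] at hw
        exact hB _ (by rw [finrank_sup_span S w (fun h => hw.2 (hWS w hw.1 h)), hS])
    _ = ((Finset.univ.filter (fun v => v ∈ W ∧ v ≠ 0)).card : ℝ) * B := by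
        rw [Finset.sum_const, nsmul_eq_mul]
    _ ≤ (Fintype.card K : ℝ) ^ (m' - t + 1) * B := by
        refine mul_le_mul_of_nonneg_right ?_ hB0
        rw [← hW]
        have h1 := card_mem W
        have h2 : (Finset.univ.filter (fun v => v ∈ W ∧ v ≠ 0)).card ≤
          (Finset.univ.filter (fun v => v ∈ W)).card :=
          Finset.card_le_card (fun v hv => by
            simp only [Finset.mem_filter, Finset.mem_univ, true_and] at hv ⊢; exact hv.1)
        rw [h1] at h2
        exact_mod_cast h2

open Classical in
theorem dual_step [Fintype K] [Fintype V] (𝒢 : Finset (Submodule K V)) (t : ℕ)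
    (B : ℝ) (hB0 : 0 ≤ B)
    (hB : ∀ S' : Submodule K V, finrank K S' = t → ((𝒢.filter (fun F => S' ≤ F)).card : ℝ) ≤ B)
    (x : ℕ) : ∀ Y : Submodule K V, finrank K Y = t + x →
    ((𝒢.filter (fun F => t ≤ finrank K ↥(Y ⊓ F))).card : ℝ)
      ≤ (Fintype.card K : ℝ) ^ ((t + 1) * x) * B := by
  have hfd : FiniteDimensional K V := Module.Finite.of_finite
  have : Finite (Dual K V) := Module.finite_of_finite K
  have : Fintype (Dual K V) := Fintype.ofFinite _
  induction x with
  | zero =>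
    intro Y hY
    rw [mul_zero, pow_zero, one_mul]
    refine le_trans ?_ (hB Y hY)
    refine Nat.cast_le.2 (Finset.card_le_card fun F hF => ?_)
    rw [Finset.mem_filter] at hF ⊢
    refine ⟨hF.1, ?_⟩
    have : Y ⊓ F = Y := Submodule.eq_of_le_of_finrank_le inf_le_left (by omega)
    exact inf_eq_left.1 this
  | succ x ih =>
    intro Y hY
    obtain ⟨W, hWY, hW⟩ := exists_sub_finrank Y x (by omega)
    obtain ⟨C, hC⟩ := Y.exists_isCompl
    have hCd := finrank_of_compl _ _ _ hC.inf_eq_bot hC.sup_eq_top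
    rw [finrank_top] at hCd
    have hWC : finrank K ↥(W ⊔ C) = finrank K W + finrank K C :=
      (finrank_of_compl W C _ (by
        rw [eq_bot_iff, ← hC.inf_eq_bot]; exact inf_le_inf_right _ hWY) rfl).symm
    have hΦ := Subspace.finrank_add_finrank_dualAnnihilator_eq (W ⊔ C)
    have hΦ' : finrank K (W ⊔ C).dualAnnihilator = t + 1 := by omega
    have hsub : 𝒢.filter (fun F => t ≤ finrank K ↥(Y ⊓ F)) ⊆
      (Finset.univ.filter (fun φ : Dual K V => φ ∈ (W ⊔ C).dualAnnihilator ∧ φ ≠ 0)).biUnion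
        (fun φ => 𝒢.filter (fun F => t ≤ finrank K ↥((Y ⊓ LinearMap.ker φ) ⊓ F))) := by
      intro F hF
      rw [Finset.mem_filter] at hF
      obtain ⟨S, hSF, hS⟩ := exists_sub_finrank (Y ⊓ F) t hF.2
      have h1 := Submodule.finrank_add_le_finrank_add_finrank S (W ⊔ C)
      have h2 := Subspace.finrank_add_finrank_dualAnnihilator_eq (S ⊔ (W ⊔ C))
      have h3 : (S ⊔ (W ⊔ C)).dualAnnihilator ≠ ⊥ := fun h => by
        rw [h, finrank_bot] at h2
        omega
      obtain ⟨φ, hφ, hφ0⟩ := Submodule.exists_mem_ne_zero_of_ne_bot h3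
      simp only [Finset.mem_biUnion, Finset.mem_filter, Finset.mem_univ, true_and]
      refine ⟨φ, ⟨Submodule.dualAnnihilator_anti le_sup_right hφ, hφ0⟩, hF.1, ?_⟩
      rw [← hS]
      refine Submodule.finrank_mono (le_inf (le_inf (hSF.trans inf_le_left) ?_) (hSF.trans inf_le_right))
      intro s hs
      exact (Submodule.mem_dualAnnihilator φ).1 hφ s (Submodule.mem_sup_left hs)
    have hle := (Finset.card_le_card hsub).trans Finset.card_biUnion_le
    calc ((𝒢.filter (fun F => t ≤ finrank K ↥(Y ⊓ F))).card : ℝ)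
      ≤ ∑ φ ∈ Finset.univ.filter (fun φ : Dual K V => φ ∈ (W ⊔ C).dualAnnihilator ∧ φ ≠ 0),
        ((𝒢.filter (fun F => t ≤ finrank K ↥((Y ⊓ LinearMap.ker φ) ⊓ F))).card : ℝ) := by
          exact_mod_cast hle
    _ ≤ ∑ φ ∈ Finset.univ.filter (fun φ : Dual K V => φ ∈ (W ⊔ C).dualAnnihilator ∧ φ ≠ 0),
        (Fintype.card K : ℝ) ^ ((t + 1) * x) * B := by
        refine Finset.sum_le_sum fun φ hφ => ?_
        simp only [Finset.mem_filter, Finset.mem_univ, true_and] at hφ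
        refine ih _ ?_
        have hker := Module.Dual.finrank_ker_add_one_of_ne_zero hφ.2
        have h1 := Submodule.finrank_sup_add_finrank_inf_eq Y (LinearMap.ker φ)
        have h2 : Y ⊔ LinearMap.ker φ = ⊤ := by
          by_contra hne
          have hlt := Submodule.finrank_lt (lt_top_iff_ne_top.2 hne).ne
          have hk : LinearMap.ker φ = Y ⊔ LinearMap.ker φ :=
            Submodule.eq_of_le_of_finrank_le le_sup_right (by omega)
          have hY' : Y ≤ LinearMap.ker φ := by rw [hk]; exact le_sup_left
          have hC' : C ≤ LinearMap.ker φ := fun c hc =>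
            (Submodule.mem_dualAnnihilator φ).1 hφ.1 c (Submodule.mem_sup_right hc)
          apply hφ.2
          apply LinearMap.ker_eq_top.1
          rw [eq_top_iff, ← hC.sup_eq_top]
          exact sup_le hY' hC'
        rw [h2, finrank_top] at h1
        omega
    _ = ((Finset.univ.filter (fun φ : Dual K V => φ ∈ (W ⊔ C).dualAnnihilator ∧ φ ≠ 0)).card : ℝ)
        * ((Fintype.card K : ℝ) ^ ((t + 1) * x) * B) := by
        rw [Finset.sum_const, nsmul_eq_mul]
    _ ≤ (Fintype.card K : ℝ) ^ (t + 1) * ((Fintype.card K : ℝ) ^ ((t + 1) * x) * B) := by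
        refine mul_le_mul_of_nonneg_right ?_ (by positivity)
        rw [← hΦ']
        have h1 := card_mem (W ⊔ C).dualAnnihilator
        have h2 : (Finset.univ.filter (fun φ : Dual K V => φ ∈ (W ⊔ C).dualAnnihilator ∧ φ ≠ 0)).card ≤
          (Finset.univ.filter (fun v => v ∈ (W ⊔ C).dualAnnihilator)).card :=
          Finset.card_le_card (fun v hv => by
            simp only [Finset.mem_filter, Finset.mem_univ, true_and] at hv ⊢; exact hv.1)
        rw [h1] at h2
        exact_mod_cast h2
    _ = _ := by ring

open Classical in
theorem upper [Fintype K] [Fintype V] [Fintype (Submodule K V)] (f : V →ₗ[K] V →ₗ[K] K)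
    (halt : ∀ v, f v v = 0) (hnd : ∀ v, (∀ w, f v w = 0) → v = 0)
    (hq : 2 ≤ Fintype.card K) (m m' t x y : ℕ) (hn : 2 * m ≤ finrank K V) (htm : t ≤ m')
    (𝒢 ℋ : Finset (Submodule K V))
    (h1 : ∀ F ∈ 𝒢, F ∈ polar f m) (h2 : ∀ F ∈ ℋ, F ∈ polar f m')
    (hcr : ∀ F ∈ 𝒢, ∀ H ∈ ℋ, t ≤ finrank K ↥(F ⊓ H))
    (X : Submodule K V) (hX : finrank K X = t + x) (hXc : ∀ F ∈ 𝒢, t ≤ finrank K ↥(X ⊓ F))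
    (hnc : ∀ S, TotallyIsotropic f S → finrank K S < t + y → ∃ H ∈ ℋ, finrank K ↥(S ⊓ H) < t) :
    (𝒢.card : ℝ) ≤ (Fintype.card K : ℝ) ^ ((t + 1) * x) *
      ((Fintype.card K : ℝ) ^ ((m' - t + 1) * y) *
        NN (Fintype.card K) (finrank K V) m (t + y)) := by
  have hN := NN_nonneg (Fintype.card K) (finrank K V) m (t + y) hq hn
  have key : ∀ j ≤ y, ∀ S : Submodule K V, finrank K S = t + (y - j) →
      ((𝒢.filter (fun F => S ≤ F)).card : ℝ) ≤
      (Fintype.card K : ℝ) ^ ((m' - t + 1) * j) * NN (Fintype.card K) (finrank K V) m (t + y) := by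
    intro j
    induction j with
    | zero =>
      intro _ S hS
      rw [mul_zero, pow_zero, one_mul]
      by_cases hti : TotallyIsotropic f S
      · have := cnt_eq f halt hnd m hq m S hti (by omega)
        rw [hS, Nat.sub_zero] at this
        rw [← this]
        refine Nat.cast_le.2 (Finset.card_le_card fun F hF => ?_)
        rw [Finset.mem_filter] at hF ⊢
        exact ⟨Finset.mem_univ _, h1 F hF.1, hF.2⟩
      · rw [Finset.filter_eq_empty_iff.2]
        · simpa using hN
        · intro F hF hSF
          exact hti (ti_mono hSF (h1 F hF).1)
    | succ j ih =>
      intro hj S hS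
      by_cases hti : TotallyIsotropic f S
      · obtain ⟨H, hH, hlt⟩ := hnc S hti (by omega)
        have := step 𝒢 S H t m' (t + (y - (j + 1))) _ htm (h2 H hH).2 hlt
          (fun F hF => hcr F hF H hH) hS (fun S' hS' => ih (by omega) S' (by omega))
        refine this.trans (le_of_eq ?_)
        ring
      · rw [Finset.filter_eq_empty_iff.2]
        · simp only [Finset.card_empty, Nat.cast_zero]
          positivity
        · intro F hF hSF
          exact hti (ti_mono hSF (h1 F hF).1)
  have := dual_step 𝒢 t _ (by positivity) (fun S hS => key y le_rfl S (by omega)) x X hX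
  rwa [Finset.filter_true_of_mem hXc] at this

open Classical in
theorem one_lower [Fintype K] [Fintype V] (G : Submodule K V) (hG : G ≠ ⊥) :
    (Finset.univ.filter (fun v : V => v ∈ G ∧ v ≠ 0)).card ≤ (Fintype.card K - 1) +
      (Finset.univ.filter (fun p : V × V => (p.1 ≠ 0 ∧ p.2 ∉ K ∙ p.1) ∧ p.1 ∈ G ∧ p.2 ∈ G)).card := by
  have hfd : FiniteDimensional K V := Module.Finite.of_finite
  obtain ⟨u, hu, hu0⟩ := Submodule.exists_mem_ne_zero_of_ne_bot hG
  rw [← Finset.card_filter_add_card_filter_not (s := Finset.univ.filter (fun v : V => v ∈ G ∧ v ≠ 0))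
    (fun v => v ∈ K ∙ u)]
  refine add_le_add ?_ ?_
  · have h1 := card_mem (K ∙ u)
    rw [finrank_span_singleton hu0, pow_one] at h1
    rw [← h1, ← Finset.card_erase_of_mem (a := 0) (by simp)]
    refine Finset.card_le_card fun v hv => ?_
    simp only [Finset.mem_filter, Finset.mem_univ, true_and, Finset.mem_erase] at hv ⊢
    exact ⟨hv.1.2, hv.2⟩
  · refine Finset.card_le_card_of_injOn (fun v => (u, v)) ?_ ?_
    · intro v hv
      simp only [Finset.coe_filter, Finset.mem_filter, Finset.mem_univ, true_and, Set.mem_ofPred_eq] at hv ⊢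
      exact ⟨⟨hu0, hv.2⟩, hu, hv.1.1⟩
    · intro a _ b _ h
      exact (Prod.mk.inj h).2

open Classical in
theorem C1_lower [Fintype K] [Fintype V] [Fintype (Submodule K V)] (f : V →ₗ[K] V →ₗ[K] K)
    (halt : ∀ v, f v v = 0) (hnd : ∀ v, (∀ w, f v w = 0) → v = 0)
    (hq : 2 ≤ Fintype.card K) (m t k : ℕ) (hn : 2 * m ≤ finrank K V)
    (M T : Submodule K V) (hM : TotallyIsotropic f M) (hTM : T ≤ M) (hT : finrank K T = t)
    (hk : finrank K M = t + k) :
    ((Fintype.card K : ℝ) ^ k - 1) * NN (Fintype.card K) (finrank K V) m (t + 1)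
      ≤ ((Fintype.card K : ℝ) - 1) *
        ((Finset.univ.filter (fun F => F ∈ polar f m ∧ T ≤ F ∧ t + 1 ≤ finrank K ↥(F ⊓ M))).card : ℝ)
       + (Fintype.card K : ℝ) ^ (2 * k) * NN (Fintype.card K) (finrank K V) m (t + 2) := by
  have hfd : FiniteDimensional K V := Module.Finite.of_finite
  obtain ⟨U, hUM, hU1, hU2⟩ := exists_rel_compl T M hTM
  have hUd := finrank_of_compl _ _ _ hU1 hU2
  have hUk : finrank K U = k := by omega
  have hUT : ∀ u ∈ U, u ∈ T → u = 0 := fun u hu hT => by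
    have : u ∈ T ⊓ U := ⟨hT, hu⟩
    rw [hU1] at this
    exact (Submodule.mem_bot K).1 this
  set 𝒢 := Finset.univ.filter (fun F => F ∈ polar f m ∧ T ≤ F) with h𝒢
  set 𝒞 := Finset.univ.filter (fun F => F ∈ polar f m ∧ T ≤ F ∧ t + 1 ≤ finrank K ↥(F ⊓ M)) with h𝒞
  set P := Finset.univ.filter (fun v : V => v ∈ U ∧ v ≠ 0) with hP
  set Q := Finset.univ.filter (fun p : V × V => (p.1 ≠ 0 ∧ p.2 ∉ K ∙ p.1) ∧ p.1 ∈ U ∧ p.2 ∈ U) with hQ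
  have hsub : 𝒞 ⊆ 𝒢 := fun F hF => by
    simp only [h𝒞, h𝒢, Finset.mem_filter, Finset.mem_univ, true_and] at hF ⊢
    exact ⟨hF.1, hF.2.1⟩
  -- pointwise
  have hpt : ∀ F ∈ 𝒢, ((P.bipartiteAbove (fun F v => v ∈ F) F).card : ℝ) ≤
      (if F ∈ 𝒞 then ((Fintype.card K : ℝ) - 1) else 0) +
      ((Q.bipartiteAbove (fun F (p : V × V) => p.1 ∈ F ∧ p.2 ∈ F) F).card : ℝ) := by
    intro F hF
    have e1 : P.bipartiteAbove (fun F v => v ∈ F) F =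
        Finset.univ.filter (fun v : V => v ∈ U ⊓ F ∧ v ≠ 0) := by
      ext v
      simp only [Finset.bipartiteAbove, hP, Finset.mem_filter, Finset.mem_univ, true_and,
        Submodule.mem_inf]
      tauto
    have e2 : Q.bipartiteAbove (fun F (p : V × V) => p.1 ∈ F ∧ p.2 ∈ F) F =
        Finset.univ.filter (fun p : V × V => (p.1 ≠ 0 ∧ p.2 ∉ K ∙ p.1) ∧ p.1 ∈ U ⊓ F ∧ p.2 ∈ U ⊓ F) := by
      ext v
      simp only [Finset.bipartiteAbove, hQ, Finset.mem_filter, Finset.mem_univ, true_and,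
        Submodule.mem_inf]
      tauto
    rw [e1, e2]
    by_cases hb : U ⊓ F = ⊥
    · have : Finset.univ.filter (fun v : V => v ∈ U ⊓ F ∧ v ≠ 0) = ∅ := by
        rw [Finset.filter_eq_empty_iff]
        rintro v - ⟨hv, hv0⟩
        rw [hb] at hv
        exact hv0 ((Submodule.mem_bot K).1 hv)
      rw [this]
      have hc : (0:ℝ) ≤ (Fintype.card K : ℝ) - 1 := by
        have : (2:ℝ) ≤ Fintype.card K := by exact_mod_cast hq
        linarith
      split_ifs <;> simp only [Finset.card_empty, Nat.cast_zero] <;> positivity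
    · have hFC : F ∈ 𝒞 := by
        simp only [h𝒞, h𝒢, Finset.mem_filter, Finset.mem_univ, true_and] at hF ⊢
        refine ⟨hF.1, hF.2, ?_⟩
        obtain ⟨u, hu, hu0⟩ := Submodule.exists_mem_ne_zero_of_ne_bot hb
        rw [← hT, ← finrank_sup_span T u (fun h => hu0 (hUT u hu.1 h))]
        refine Submodule.finrank_mono (sup_le (le_inf hF.2 hTM) ?_)
        rw [Submodule.span_singleton_le_iff_mem]
        exact ⟨hu.2, hUM hu.1⟩
      rw [if_pos hFC]
      have h := one_lower (U ⊓ F) hb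
      have h' : ((Finset.univ.filter (fun v : V => v ∈ U ⊓ F ∧ v ≠ 0)).card : ℝ) ≤
        ((Fintype.card K - 1 : ℕ) : ℝ) + ((Finset.univ.filter
          (fun p : V × V => (p.1 ≠ 0 ∧ p.2 ∉ K ∙ p.1) ∧ p.1 ∈ U ⊓ F ∧ p.2 ∈ U ⊓ F)).card : ℝ) := by
        exact_mod_cast h
      rwa [Nat.cast_sub (by omega), Nat.cast_one] at h'
  have hsum := Finset.sum_le_sum hpt
  rw [Finset.sum_add_distrib, ← Finset.sum_filter, Finset.filter_mem_eq_inter,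
    Finset.inter_eq_right.2 hsub, Finset.sum_const, nsmul_eq_mul] at hsum
  have hdP : (∑ F ∈ 𝒢, ((P.bipartiteAbove (fun F v => v ∈ F) F).card : ℝ))
      = ((Fintype.card K : ℝ) ^ k - 1) * NN (Fintype.card K) (finrank K V) m (t + 1) := by
    have h := Finset.sum_card_bipartiteAbove_eq_sum_card_bipartiteBelow
      (s := 𝒢) (t := P) (fun F v => v ∈ F)
    rw [← Nat.cast_sum, h, Nat.cast_sum]
    have hc : (P.card : ℝ) = (Fintype.card K : ℝ) ^ k - 1 := by
      have := card_diff (K := K) ⊥ U bot_le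
      rw [finrank_bot, pow_zero, hUk] at this
      rw [← this]
      simp only [hP, Submodule.mem_bot, ne_eq]
    rw [← hc, ← nsmul_eq_mul, ← Finset.sum_const]
    refine Finset.sum_congr rfl fun v hv => ?_
    simp only [hP, Finset.mem_filter, Finset.mem_univ, true_and] at hv
    have hr : finrank K ↥(T ⊔ K ∙ v) = t + 1 := by
      rw [finrank_sup_span T v (fun h => hv.2 (hUT v hv.1 h)), hT]
    have hti : TotallyIsotropic f (T ⊔ K ∙ v) :=
      ti_mono (sup_le hTM ((Submodule.span_singleton_le_iff_mem _ _).2 (hUM hv.1))) hM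
    rw [← hr, ← cnt_eq f halt hnd m hq m _ hti (by omega)]
    congr 2
    ext F
    simp only [Finset.bipartiteBelow, h𝒢, Finset.mem_filter, Finset.mem_univ, true_and, sup_le_iff,
        Submodule.span_singleton_le_iff_mem, and_assoc]
  have hdQ : (∑ F ∈ 𝒢, ((Q.bipartiteAbove (fun F (p : V × V) => p.1 ∈ F ∧ p.2 ∈ F) F).card : ℝ))
      ≤ (Fintype.card K : ℝ) ^ (2 * k) * NN (Fintype.card K) (finrank K V) m (t + 2) := by
    have h := Finset.sum_card_bipartiteAbove_eq_sum_card_bipartiteBelow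
      (s := 𝒢) (t := Q) (fun F (p : V × V) => p.1 ∈ F ∧ p.2 ∈ F)
    rw [← Nat.cast_sum, h, Nat.cast_sum]
    have hN := NN_nonneg (Fintype.card K) (finrank K V) m (t + 2) hq hn
    have hc : (Q.card : ℝ) ≤ (Fintype.card K : ℝ) ^ (2 * k) := by
      have h1 : Q ⊆ (Finset.univ.filter (fun v => v ∈ U)) ×ˢ (Finset.univ.filter (fun v => v ∈ U)) := by
        intro p hp
        simp only [hQ, Finset.mem_filter, Finset.mem_univ, true_and, Finset.mem_product] at hp ⊢
        exact hp.2
      have h2 := Finset.card_le_card h1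
      rw [Finset.card_product, card_mem, hUk, ← pow_add, ← two_mul] at h2
      exact_mod_cast h2
    refine le_trans (le_of_eq ?_) (mul_le_mul_of_nonneg_right hc hN)
    rw [← nsmul_eq_mul, ← Finset.sum_const]
    refine Finset.sum_congr rfl fun p hp => ?_
    simp only [hQ, Finset.mem_filter, Finset.mem_univ, true_and] at hp
    obtain ⟨⟨hp1, hp2⟩, hu1, hu2⟩ := hp
    have hr : finrank K ↥(T ⊔ K ∙ p.1) = t + 1 := by
      rw [finrank_sup_span T p.1 (fun h => hp1 (hUT _ hu1 h)), hT]
    have hr2 : finrank K ↥((T ⊔ K ∙ p.1) ⊔ K ∙ p.2) = t + 2 := by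
      rw [finrank_sup_span _ p.2 ?_, hr]
      intro hmem
      obtain ⟨a, ha, b, hb, hab⟩ := Submodule.mem_sup.1 hmem
      have hbU : b ∈ U := (Submodule.span_singleton_le_iff_mem _ _).2 hu1 hb
      have ha0 : a = 0 := hUT a (by
        have : a = p.2 - b := by rw [← hab]; abel
        rw [this]; exact U.sub_mem hu2 hbU) ha
      rw [ha0, zero_add] at hab
      exact hp2 (hab ▸ hb)
    have hti : TotallyIsotropic f ((T ⊔ K ∙ p.1) ⊔ K ∙ p.2) :=
      ti_mono (sup_le (sup_le hTM ((Submodule.span_singleton_le_iff_mem _ _).2 (hUM hu1)))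
        ((Submodule.span_singleton_le_iff_mem _ _).2 (hUM hu2))) hM
    rw [← hr2, ← cnt_eq f halt hnd m hq m _ hti (by omega)]
    congr 2
    ext F
    simp only [Finset.bipartiteBelow, h𝒢, Finset.mem_filter, Finset.mem_univ, true_and, sup_le_iff,
        Submodule.span_singleton_le_iff_mem, and_assoc]
  rw [hdP] at hsum
  linarith

theorem NN_iter (q n m a e j : ℕ) (h : ∀ i < j, (q:ℝ) ^ e * NN q n m (a + i + 1) ≤ NN q n m (a + i)) :
    (q:ℝ) ^ (e * j) * NN q n m (a + j) ≤ NN q n m a := by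
  induction j with
  | zero => simp
  | succ j ih =>
    have h1 := ih (fun i hi => h i (by omega))
    have h2 := h j (by omega)
    calc (q:ℝ) ^ (e * (j + 1)) * NN q n m (a + (j + 1))
        = (q:ℝ) ^ (e * j) * ((q:ℝ) ^ e * NN q n m (a + j + 1)) := by
          rw [mul_add, pow_add, mul_one, mul_assoc, add_assoc]
      _ ≤ (q:ℝ) ^ (e * j) * NN q n m (a + j) := by gcongr
      _ ≤ _ := h1

theorem C1_arith (Q N N' c : ℝ) (e s : ℕ) (hQ : 2 ≤ Q) (hN : 0 < N) (hN' : 0 ≤ N')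
    (h1 : (Q ^ (e + 2) - 1) * N ≤ (Q - 1) * c + Q ^ (2 * (e + 2)) * N')
    (h2 : Q ^ (e + 5 + s) * N' ≤ N) : Q ^ (e + 1) * N < c := by
  have hQe : (1:ℝ) ≤ Q ^ e := one_le_pow₀ (by linarith)
  have hQs : (1:ℝ) ≤ Q ^ s := one_le_pow₀ (by linarith)
  have h3 : Q ^ (e + 5) * N' ≤ N := by
    refine le_trans ?_ h2
    rw [pow_add _ (e + 5)]
    have : 0 ≤ Q ^ (e + 5) * N' := by positivity
    nlinarith
  have h4 : Q * (Q ^ (2 * (e + 2)) * N') ≤ Q ^ e * N := by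
    calc Q * (Q ^ (2 * (e + 2)) * N') = Q ^ e * (Q ^ (e + 5) * N') := by ring
      _ ≤ _ := by gcongr
  have h5 : 0 ≤ Q ^ (2 * (e + 2)) * N' := by positivity
  have h6 : 2 * (Q ^ (2 * (e + 2)) * N') ≤ Q ^ e * N := by nlinarith
  have h7 : Q ^ (e + 2) = Q * Q ^ (e + 1) := by ring
  have h8 : Q ^ (e + 1) = Q * Q ^ e := by ring
  have h9 : 2 * Q ^ e ≤ Q ^ (e + 1) := by rw [h8]; gcongr
  have h10 : (1 + Q ^ e) * N ≤ Q ^ (e + 1) * N := by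
    apply mul_le_mul_of_nonneg_right _ hN.le
    linarith
  have h11 : 0 < Q ^ e * N := by positivity
  have h12 : (Q - 1) * (Q ^ (e + 1) * N) < (Q - 1) * c := by
    rw [h7] at h1
    nlinarith
  exact lt_of_mul_lt_mul_left h12 (by linarith)

theorem tau_facts {f : V →ₗ[K] V →ₗ[K] K} [FiniteDimensional K V] (t m : ℕ)
    (ℱ ℋ : Set (Submodule K V)) (hne : ℱ.Nonempty) (hHne : ℋ.Nonempty)
    (hH : ℋ ⊆ polar f m) (hcr : ∀ F ∈ ℱ, ∀ H ∈ ℋ, t ≤ finrank K ↥(F ⊓ H)) :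
    t ≤ tauCover f t ℱ ∧ tauCover f t ℱ ≤ m ∧
    (∃ X, TotallyIsotropic f X ∧ finrank K X = tauCover f t ℱ ∧ ∀ F ∈ ℱ, t ≤ finrank K ↥(X ⊓ F)) ∧
    (∀ S, TotallyIsotropic f S → finrank K S < tauCover f t ℱ → ∃ F ∈ ℱ, finrank K ↥(S ⊓ F) < t) := by
  obtain ⟨H, hHm⟩ := hHne
  have hmem : m ∈ {x | ∃ X, IsTCover f t ℱ X ∧ finrank K ↥X = x} :=
    ⟨H, ⟨(hH hHm).1, fun F hF => by rw [inf_comm]; exact hcr F hF H hHm⟩, (hH hHm).2⟩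
  obtain ⟨X, hX, hXd⟩ := Nat.sInf_mem ⟨m, hmem⟩
  refine ⟨?_, Nat.sInf_le hmem, ⟨X, hX.1, hXd, hX.2⟩, ?_⟩
  · obtain ⟨F, hF⟩ := hne
    have h1 := hX.2 F hF
    have h2 : finrank K ↥(X ⊓ F) ≤ finrank K X := Submodule.finrank_mono inf_le_left
    unfold tauCover
    omega
  · intro S hS hlt
    by_contra hcon
    push Not at hcon
    exact absurd (Nat.sInf_le (s := {x | ∃ X, IsTCover f t ℱ X ∧ finrank K ↥X = x})
      ⟨S, ⟨hS, hcon⟩, rfl⟩) (not_le.2 hlt)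

end helpers

theorem stmt_18
    (q ν m₁ m₂ t : ℕ) (hq : IsPrimePow q)
    {K : Type} [Field K] [Fintype K] (hK : Fintype.card K = q)
    (f : (Fin (2 * ν) → K) →ₗ[K] (Fin (2 * ν) → K) →ₗ[K] K)
    (halt : ∀ v, f v v = 0)
    (hnd : ∀ v, (∀ w, f v w = 0) → v = 0)
    (hν : 0 < ν) (ht : 0 < t) (hm₁ : t + 1 ≤ m₁) (hm₂ : t + 1 ≤ m₂)
    (hdim : m₁ + m₂ + 1 + max (m₁ + t + 2) m₂ ≤ 2 * ν)
    (ℱ₁ ℱ₂ : Set (Submodule K (Fin (2 * ν) → K)))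
    (h1ne : ℱ₁.Nonempty) (h2ne : ℱ₂.Nonempty)
    (h1 : ℱ₁ ⊆ polar f m₁) (h2 : ℱ₂ ⊆ polar f m₂)
    (hcross : ∀ F₁ ∈ ℱ₁, ∀ F₂ ∈ ℱ₂, t ≤ finrank K ↥(F₁ ⊓ F₂))
    (hnt : ¬ ∃ T ∈ polar f t, (∀ F ∈ ℱ₁, T ≤ F) ∧ (∀ F ∈ ℱ₂, T ≤ F))
    (htau : tauCover f t ℱ₁ ≤ tauCover f t ℱ₂)
    (htau' : (tauCover f t ℱ₁, tauCover f t ℱ₂) ≠ (t, t + 1)) :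
    ∀ M ∈ polar f (m₂ + 1), ∀ T : Submodule K (Fin (2 * ν) → K),
      T ≤ M → finrank K T = t →
      ℱ₁.ncard * ℱ₂.ncard < (C1 f M T m₁ t).ncard * (C2 f M T m₂).ncard := by
  classical
  intro M hM T hTM hT
  subst hK
  have hfinS : Finite (Submodule K (Fin (2 * ν) → K)) := inferInstance
  let _ : Fintype (Submodule K (Fin (2 * ν) → K)) := Fintype.ofFinite _
  have hV : finrank K (Fin (2 * ν) → K) = 2 * ν := by simp
  have hq2 : 2 ≤ Fintype.card K := Fintype.one_lt_card
  have hQ2 : (2:ℝ) ≤ Fintype.card K := by exact_mod_cast hq2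
  have hQ1 : (1:ℝ) ≤ Fintype.card K := by linarith
  have hd1 : 2 * m₁ + m₂ + t + 3 ≤ 2 * ν := by
    have := le_max_left (m₁ + t + 2) m₂; omega
  have hd2 : m₁ + 2 * m₂ + 1 ≤ 2 * ν := by
    have := le_max_right (m₁ + t + 2) m₂; omega
  have hcross' : ∀ F₂ ∈ ℱ₂, ∀ F₁ ∈ ℱ₁, t ≤ finrank K ↥(F₂ ⊓ F₁) :=
    fun F₂ h₂ F₁ h₁ => by rw [inf_comm]; exact hcross F₁ h₁ F₂ h₂
  obtain ⟨ht1, hτ1, ⟨X₁, hX1t, hX1d, hX1c⟩, hn1⟩ := tau_facts t m₂ ℱ₁ ℱ₂ h1ne h2ne h2 hcross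
  obtain ⟨ht2, hτ2, ⟨X₂, hX2t, hX2d, hX2c⟩, hn2⟩ := tau_facts t m₁ ℱ₂ ℱ₁ h2ne h1ne h1 hcross'
  obtain ⟨x, hx⟩ := Nat.exists_eq_add_of_le ht1
  obtain ⟨y, hy⟩ := Nat.exists_eq_add_of_le ht2
  rw [hx, hy] at htau htau'
  rw [hx] at hτ1 hX1d hn1
  rw [hy] at hτ2 hX2d hn2
  -- finsets
  set 𝒢₁ := ℱ₁.toFinset with h𝒢₁
  set 𝒢₂ := ℱ₂.toFinset with h𝒢₂
  have hm1 : ∀ F, F ∈ 𝒢₁ ↔ F ∈ ℱ₁ := fun F => Set.mem_toFinset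
  have hm2 : ∀ F, F ∈ 𝒢₂ ↔ F ∈ ℱ₂ := fun F => Set.mem_toFinset
  have hc1 : ℱ₁.ncard = 𝒢₁.card := Set.ncard_eq_toFinset_card' _
  have hc2 : ℱ₂.ncard = 𝒢₂.card := Set.ncard_eq_toFinset_card' _
  have hpos1 := NN_pos (Fintype.card K) (2 * ν) m₁ (t + 1) hq2 (by omega) (by omega)
  have hpos2 := NN_pos (Fintype.card K) (2 * ν) m₂ t hq2 (by omega) (by omega)
  have r1 : ∀ a, (Fintype.card K : ℝ) ^ (m₂ + t + 4) * NN (Fintype.card K) (2 * ν) m₁ (a + 1) ≤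
      NN (Fintype.card K) (2 * ν) m₁ a := fun a =>
    NN_step _ _ _ _ _ hq2 (by omega) (by omega)
  have r2 : ∀ a < m₁, (Fintype.card K : ℝ) ^ (m₁ + t + 4) * NN (Fintype.card K) (2 * ν) m₂ (a + 1) ≤
      NN (Fintype.card K) (2 * ν) m₂ a := fun a ha =>
    NN_step _ _ _ _ _ hq2 (by omega) (by omega)
  -- C1
  have hC1 : (Fintype.card K : ℝ) ^ (m₂ - t) * NN (Fintype.card K) (2 * ν) m₁ (t + 1) <
      ((C1 f M T m₁ t).ncard : ℝ) := by
    have h := C1_lower f halt hnd hq2 m₁ t (m₂ + 1 - t) (by omega) M T hM.1 hTM hT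
      (by rw [hM.2]; omega)
    rw [hV] at h
    have hcc : (C1 f M T m₁ t).ncard = (Finset.univ.filter
        (fun F => F ∈ polar f m₁ ∧ T ≤ F ∧ t + 1 ≤ finrank K ↥(F ⊓ M))).card := by
      rw [Set.ncard_eq_toFinset_card']
      congr 1
      ext F
      simp only [Set.mem_toFinset, Finset.mem_filter, Finset.mem_univ, true_and]
      exact Iff.rfl
    rw [hcc]
    obtain ⟨e, rfl⟩ := Nat.exists_eq_add_of_le hm₂
    have hr := r1 (t + 1)
    rw [show t + 1 + e - t = e + 1 by omega]
    rw [show t + 1 + e + 1 - t = e + 2 by omega] at h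
    rw [show t + 1 + e + t + 4 = e + 5 + 2 * t by omega] at hr
    exact C1_arith _ _ _ _ e (2 * t) hQ2 hpos1
      (NN_nonneg _ _ _ _ hq2 (by omega)) h hr
  have hC2 : NN (Fintype.card K) (2 * ν) m₂ t ≤ ((C2 f M T m₂).ncard : ℝ) := by
    have h := cnt_eq f halt hnd m₂ hq2 m₂ T (ti_mono hTM hM.1) (by omega)
    rw [hV, hT] at h
    rw [← h, Set.ncard_eq_toFinset_card']
    refine Nat.cast_le.2 (Finset.card_le_card fun F hF => ?_)
    simp only [Finset.mem_filter, Finset.mem_univ, true_and] at hF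
    rw [Set.mem_toFinset]
    exact Or.inl hF
  have hCC : ((Fintype.card K : ℝ) ^ (m₂ - t) * NN (Fintype.card K) (2 * ν) m₁ (t + 1)) *
      NN (Fintype.card K) (2 * ν) m₂ t <
      ((C1 f M T m₁ t).ncard : ℝ) * ((C2 f M T m₂).ncard : ℝ) :=
    mul_lt_mul hC1 hC2 hpos2 (Nat.cast_nonneg _)
  have hfin : (𝒢₁.card : ℝ) * (𝒢₂.card : ℝ) ≤
      ((Fintype.card K : ℝ) ^ (m₂ - t) * NN (Fintype.card K) (2 * ν) m₁ (t + 1)) *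
      NN (Fintype.card K) (2 * ν) m₂ t := by
    rcases Nat.eq_zero_or_pos y with hy0 | hy0
    · have hx0 : x = 0 := by omega
      subst hx0 hy0
      -- bound for both families by one step
      have hsup1 : ∀ F ∈ ℱ₁, X₁ ≤ F := fun F hF => by
        have h := hX1c F hF
        have : X₁ ⊓ F = X₁ := Submodule.eq_of_le_of_finrank_le inf_le_left (by omega)
        exact inf_eq_left.1 this
      have hsup2 : ∀ F ∈ ℱ₂, X₂ ≤ F := fun F hF => by
        have h := hX2c F hF
        have : X₂ ⊓ F = X₂ := Submodule.eq_of_le_of_finrank_le inf_le_left (by omega)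
        exact inf_eq_left.1 this
      have hex1 : ∃ H ∈ ℱ₂, finrank K ↥(X₁ ⊓ H) < t := by
        by_contra hcon
        push Not at hcon
        refine hnt ⟨X₁, ⟨hX1t, by omega⟩, hsup1, fun F hF => ?_⟩
        have h := hcon F hF
        have : X₁ ⊓ F = X₁ := Submodule.eq_of_le_of_finrank_le inf_le_left (by omega)
        exact inf_eq_left.1 this
      have hex2 : ∃ H ∈ ℱ₁, finrank K ↥(X₂ ⊓ H) < t := by
        by_contra hcon
        push Not at hcon
        refine hnt ⟨X₂, ⟨hX2t, by omega⟩, fun F hF => ?_, hsup2⟩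
        have h := hcon F hF
        have : X₂ ⊓ F = X₂ := Submodule.eq_of_le_of_finrank_le inf_le_left (by omega)
        exact inf_eq_left.1 this
      obtain ⟨H₂, hH2, hl2⟩ := hex1
      obtain ⟨H₁, hH1, hl1⟩ := hex2
      have hB : ∀ (m : ℕ) (𝒢 : Finset (Submodule K (Fin (2 * ν) → K))), 2 * m ≤ 2 * ν →
          (∀ F ∈ 𝒢, F ∈ polar f m) → ∀ S' : Submodule K (Fin (2 * ν) → K), finrank K S' = t + 1 →
          ((𝒢.filter (fun F => S' ≤ F)).card : ℝ) ≤ NN (Fintype.card K) (2 * ν) m (t + 1) := by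
        intro m 𝒢 hmν hpol S hS
        by_cases hti : TotallyIsotropic f S
        · have := cnt_eq f halt hnd m hq2 m S hti (by omega)
          rw [hS, hV] at this
          rw [← this]
          refine Nat.cast_le.2 (Finset.card_le_card fun F hF => ?_)
          rw [Finset.mem_filter] at hF ⊢
          exact ⟨Finset.mem_univ _, hpol F hF.1, hF.2⟩
        · rw [Finset.filter_eq_empty_iff.2]
          · simpa using NN_nonneg _ _ _ _ hq2 hmν
          · intro F hF hSF
            exact hti (ti_mono hSF (hpol F hF).1)
      have s1 := step 𝒢₁ X₁ H₂ t m₂ t _ (by omega) (h2 hH2).2 hl2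
        (fun F hF => hcross F ((hm1 F).1 hF) H₂ hH2) (by omega)
        (hB m₁ 𝒢₁ (by omega) (fun F hF => h1 ((hm1 F).1 hF)))
      have s2 := step 𝒢₂ X₂ H₁ t m₁ t _ (by omega) (h1 hH1).2 hl1
        (fun F hF => hcross' F ((hm2 F).1 hF) H₁ hH1) (by omega)
        (hB m₂ 𝒢₂ (by omega) (fun F hF => h2 ((hm2 F).1 hF)))
      rw [Finset.filter_true_of_mem (fun F hF => hsup1 F ((hm1 F).1 hF))] at s1
      rw [Finset.filter_true_of_mem (fun F hF => hsup2 F ((hm2 F).1 hF))] at s2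
      have hr := r2 t (by omega)
      have hN2 := NN_nonneg (Fintype.card K) (2 * ν) m₂ (t + 1) hq2 (by omega)
      calc (𝒢₁.card : ℝ) * (𝒢₂.card : ℝ)
          ≤ ((Fintype.card K : ℝ) ^ (m₂ - t + 1) * NN (Fintype.card K) (2 * ν) m₁ (t + 1)) *
            ((Fintype.card K : ℝ) ^ (m₁ - t + 1) * NN (Fintype.card K) (2 * ν) m₂ (t + 1)) :=
            mul_le_mul s1 s2 (by positivity) (by positivity)
        _ = (Fintype.card K : ℝ) ^ (m₂ - t) * NN (Fintype.card K) (2 * ν) m₁ (t + 1) *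
            ((Fintype.card K : ℝ) ^ (m₁ - t + 1 + 1) * NN (Fintype.card K) (2 * ν) m₂ (t + 1)) := by
            ring
        _ ≤ (Fintype.card K : ℝ) ^ (m₂ - t) * NN (Fintype.card K) (2 * ν) m₁ (t + 1) *
            ((Fintype.card K : ℝ) ^ (m₁ + t + 4) * NN (Fintype.card K) (2 * ν) m₂ (t + 1)) := by
            refine mul_le_mul_of_nonneg_left (mul_le_mul_of_nonneg_right
              (pow_le_pow_right₀ hQ1 (by omega)) hN2) (by positivity)
        _ ≤ _ := by gcongr
    · obtain ⟨z, rfl⟩ : ∃ z, y = z + 1 := ⟨y - 1, by omega⟩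
      have hxz : 1 ≤ x + z := by
        by_contra hcon
        have hx0 : x = 0 := by omega
        have hz0 : z = 0 := by omega
        subst hx0 hz0
        exact htau' rfl
      have u1 := upper f halt hnd hq2 m₁ m₂ t x (z + 1) (by omega) (by omega) 𝒢₁ 𝒢₂
        (fun F hF => h1 ((hm1 F).1 hF)) (fun F hF => h2 ((hm2 F).1 hF))
        (fun F hF H hH => hcross F ((hm1 F).1 hF) H ((hm2 H).1 hH)) X₁ hX1d
        (fun F hF => hX1c F ((hm1 F).1 hF))
        (fun S hS hlt => by
          obtain ⟨H, hH, hl⟩ := hn2 S hS hlt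
          exact ⟨H, (hm2 H).2 hH, hl⟩)
      have u2 := upper f halt hnd hq2 m₂ m₁ t (z + 1) x (by omega) (by omega) 𝒢₂ 𝒢₁
        (fun F hF => h2 ((hm2 F).1 hF)) (fun F hF => h1 ((hm1 F).1 hF))
        (fun F hF H hH => hcross' F ((hm2 F).1 hF) H ((hm1 H).1 hH)) X₂ hX2d
        (fun F hF => hX2c F ((hm2 F).1 hF))
        (fun S hS hlt => by
          obtain ⟨H, hH, hl⟩ := hn1 S hS hlt
          exact ⟨H, (hm1 H).2 hH, hl⟩)
      rw [hV] at u1 u2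
      have i1 := NN_iter (Fintype.card K) (2 * ν) m₁ (t + 1) (m₂ + t + 4) z (fun i _ => r1 _)
      have i2 := NN_iter (Fintype.card K) (2 * ν) m₂ t (m₁ + t + 4) x (fun i hi => r2 _ (by omega))
      rw [show t + 1 + z = t + (z + 1) by omega] at i1
      have hN1 := NN_nonneg (Fintype.card K) (2 * ν) m₁ (t + (z + 1)) hq2 (by omega)
      have hN2 := NN_nonneg (Fintype.card K) (2 * ν) m₂ (t + x) hq2 (by omega)
      have hexp : (t + 1) * x + (m₂ - t + 1) * (z + 1) + ((t + 1) * (z + 1) + (m₁ - t + 1) * x) ≤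
          (m₂ - t) + (m₂ + t + 4) * z + (m₁ + t + 4) * x := by
        obtain ⟨d₁, hd₁⟩ := Nat.exists_eq_add_of_le (show t ≤ m₁ by omega)
        obtain ⟨d₂, hd₂⟩ := Nat.exists_eq_add_of_le (show t ≤ m₂ by omega)
        rw [hd₁, hd₂, Nat.add_sub_cancel_left, Nat.add_sub_cancel_left]
        have : (t + 2) * 1 ≤ (t + 2) * (x + z) := Nat.mul_le_mul_left _ hxz
        nlinarith
      calc (𝒢₁.card : ℝ) * (𝒢₂.card : ℝ)
          ≤ ((Fintype.card K : ℝ) ^ ((t + 1) * x) * ((Fintype.card K : ℝ) ^ ((m₂ - t + 1) * (z + 1)) *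
              NN (Fintype.card K) (2 * ν) m₁ (t + (z + 1)))) *
            ((Fintype.card K : ℝ) ^ ((t + 1) * (z + 1)) * ((Fintype.card K : ℝ) ^ ((m₁ - t + 1) * x) *
              NN (Fintype.card K) (2 * ν) m₂ (t + x))) :=
            mul_le_mul u1 u2 (by positivity) (by positivity)
        _ = (Fintype.card K : ℝ) ^ ((t + 1) * x + (m₂ - t + 1) * (z + 1) +
              ((t + 1) * (z + 1) + (m₁ - t + 1) * x)) *
            (NN (Fintype.card K) (2 * ν) m₁ (t + (z + 1)) * NN (Fintype.card K) (2 * ν) m₂ (t + x)) := by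
            simp only [pow_add]; ring
        _ ≤ (Fintype.card K : ℝ) ^ ((m₂ - t) + (m₂ + t + 4) * z + (m₁ + t + 4) * x) *
            (NN (Fintype.card K) (2 * ν) m₁ (t + (z + 1)) * NN (Fintype.card K) (2 * ν) m₂ (t + x)) :=
            mul_le_mul_of_nonneg_right (pow_le_pow_right₀ hQ1 hexp) (by positivity)
        _ = (Fintype.card K : ℝ) ^ (m₂ - t) * ((Fintype.card K : ℝ) ^ ((m₂ + t + 4) * z) *
              NN (Fintype.card K) (2 * ν) m₁ (t + (z + 1))) *
            ((Fintype.card K : ℝ) ^ ((m₁ + t + 4) * x) * NN (Fintype.card K) (2 * ν) m₂ (t + x)) := by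
            rw [pow_add, pow_add]; ring
        _ ≤ _ := by gcongr
  rw [hc1, hc2]
  have := hfin.trans_lt hCC
  exact_mod_cast this

end
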